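/- arXiv:2109.09877 — 2 statements merged into one kernel-verified Lean document; each statement's English description precedes it below -/
import Mathlib

section
/- Let p > 3 be a prime. Then ∑_{k=1}^{(p-1)/2} (p/2 - k)·H(2;k)/((p+1-2k)(p+2k)) ≡ 4·q_p(2) - (7/8)·B_{p-3} modulo p (as rational numbers). -/
/-- Two rationals `a` and `b` are congruent modulo `p^r`:
the `p`-adic valuation of `a - b` is at least `r`, i.e. `a - b = c * p^r`
with the denominator of `c` not divisible by `p`. -/
def ratCongr (p r : ℕ) (a b : ℚ) : Prop :=
  ∃ c : ℚ, a - b = c * (p : ℚ) ^ r ∧ ¬ (p ∣ c.den)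

/-- The Fermat quotient `q_p(2) = (2^(p-1) - 1)/p` (an integer for odd primes),
viewed as a rational number. -/
def fermatQ (p : ℕ) : ℚ := ((2 : ℚ) ^ (p - 1) - 1) / p

/-- The generalized harmonic number of order 2: `H(2;n) = ∑_{j=1}^n 1/j^2`. -/
def harmonic2 (n : ℕ) : ℚ := ∑ j ∈ Finset.Icc 1 n, 1 / (j : ℚ) ^ 2

/-- `q` is a `p`-integral rational number whose residue class modulo `p` is `z`. -/
def ReducesTo (p : ℕ) [Fact p.Prime] (q : ℚ) (z : ZMod p) : Prop :=
  ∃ a b : ℤ, (b : ZMod p) ≠ 0 ∧ q = a / b ∧ z = a / b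

namespace ReducesTo

variable {p : ℕ} [Fact p.Prime] {q r : ℚ} {y z : ZMod p}

theorem intCast (n : ℤ) : ReducesTo p n n := ⟨n, 1, by simp, by simp, by simp⟩

theorem natCast (n : ℕ) : ReducesTo p n n := by
  simpa using intCast (p := p) (n : ℤ)

theorem ratCast_ne_zero {b : ℤ} (hb : (b : ZMod p) ≠ 0) : (b : ℚ) ≠ 0 := by
  rintro h
  exact hb (by simp [Int.cast_eq_zero.mp h])

theorem add (hq : ReducesTo p q y) (hr : ReducesTo p r z) : ReducesTo p (q + r) (y + z) := by
  obtain ⟨a, b, hb, rfl, rfl⟩ := hq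
  obtain ⟨c, d, hd, rfl, rfl⟩ := hr
  refine ⟨a * d + b * c, b * d, by simp [hb, hd], ?_, ?_⟩
  · push_cast
    exact div_add_div _ _ (ratCast_ne_zero hb) (ratCast_ne_zero hd)
  · push_cast
    exact div_add_div _ _ hb hd

theorem mul (hq : ReducesTo p q y) (hr : ReducesTo p r z) : ReducesTo p (q * r) (y * z) := by
  obtain ⟨a, b, hb, rfl, rfl⟩ := hq
  obtain ⟨c, d, hd, rfl, rfl⟩ := hr
  refine ⟨a * c, b * d, by simp [hb, hd], ?_, ?_⟩ <;> push_cast <;> exact div_mul_div_comm ..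

theorem sub (hq : ReducesTo p q y) (hr : ReducesTo p r z) : ReducesTo p (q - r) (y - z) := by
  simpa [sub_eq_add_neg] using hq.add ((intCast (p := p) (-1)).mul hr)

theorem inv (hq : ReducesTo p q y) (hy : y ≠ 0) : ReducesTo p q⁻¹ y⁻¹ := by
  obtain ⟨a, b, hb, rfl, rfl⟩ := hq
  exact ⟨b, a, fun h => hy (by simp [h]), by simp, by simp⟩

theorem div (hq : ReducesTo p q y) (hr : ReducesTo p r z) (hz : z ≠ 0) :
    ReducesTo p (q / r) (y / z) := by
  simpa [div_eq_mul_inv] using hq.mul (hr.inv hz)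

theorem pow (hq : ReducesTo p q y) (n : ℕ) : ReducesTo p (q ^ n) (y ^ n) := by
  induction n with
  | zero => simpa using natCast (p := p) 1
  | succ n ih => simpa [pow_succ] using ih.mul hq

theorem sum {ι : Type*} {s : Finset ι} {f : ι → ℚ} {g : ι → ZMod p}
    (h : ∀ i ∈ s, ReducesTo p (f i) (g i)) : ReducesTo p (∑ i ∈ s, f i) (∑ i ∈ s, g i) := by
  classical
  induction s using Finset.induction_on with
  | empty => simpa using natCast (p := p) 0
  | insert a s ha ih =>
    rw [Finset.sum_insert ha, Finset.sum_insert ha]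
    exact (h a (by simp)).add (ih fun i hi => h i (by simp [hi]))

theorem unique (hy : ReducesTo p q y) (hz : ReducesTo p q z) : y = z := by
  obtain ⟨a, b, hb, h, hyz⟩ := hy.sub hz
  rw [sub_self, eq_comm, div_eq_zero_iff, or_iff_left (ratCast_ne_zero hb)] at h
  rw [Int.cast_eq_zero.mp h, Int.cast_zero, zero_div] at hyz
  exact sub_eq_zero.mp hyz

theorem ratCongr_one (hq : ReducesTo p q z) (hr : ReducesTo p r z) : ratCongr p 1 q r := by
  obtain ⟨a, b, hb, h, hz⟩ := hq.sub hr
  rw [sub_self, eq_comm, div_eq_zero_iff, or_iff_left hb, ZMod.intCast_zmod_eq_zero_iff_dvd] at hz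
  obtain ⟨c, rfl⟩ := hz
  refine ⟨c / b, by rw [h]; push_cast; ring, fun hdvd => hb ?_⟩
  rw [ZMod.intCast_zmod_eq_zero_iff_dvd]
  exact (Int.natCast_dvd_natCast.mpr hdvd).trans (by
    simpa [Rat.divInt_eq_div] using Rat.den_dvd c b)

end ReducesTo

theorem ZMod.natCast_ne_zero_of_pos_of_lt {p k : ℕ} (hk : 0 < k) (hkp : k < p) :
    (k : ZMod p) ≠ 0 := by
  rw [Ne, ZMod.natCast_eq_zero_iff]
  exact Nat.not_dvd_of_pos_of_lt hk hkp

theorem exists_reducesTo_bernoulli' {p : ℕ} [Fact p.Prime] (n : ℕ) (hn : n + 1 < p) :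
    ∃ z, ReducesTo p (bernoulli' n) z := by
  induction n using Nat.strong_induction_on with
  | _ n ih =>
    choose! β hβ using ih
    rw [bernoulli'_def]
    refine ⟨_, .sub (y := 1) (by simpa using ReducesTo.natCast (p := p) 1) (.sum (g := fun k =>
      (n.choose k : ZMod p) / ((n - k + 1 : ℕ) : ZMod p) * β k) fun k hk => ?_)⟩
    have hk := Finset.mem_range.mp hk
    refine .mul ?_ (hβ k hk (by omega))
    have := (ReducesTo.natCast (p := p) (n.choose k)).div (.natCast (n - k + 1))
      (ZMod.natCast_ne_zero_of_pos_of_lt (by omega) (by omega))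
    simpa [Nat.cast_sub hk.le] using this

theorem exists_reducesTo_bernoulli {p : ℕ} [Fact p.Prime] (n : ℕ) (hn : n + 1 < p) :
    ∃ z, ReducesTo p (bernoulli n) z := by
  obtain ⟨z, hz⟩ := exists_reducesTo_bernoulli' n hn
  refine ⟨_, by simpa [bernoulli] using ((ReducesTo.intCast (-1)).pow n).mul hz⟩

namespace ZMod

variable {p : ℕ} [Fact p.Prime]

theorem sum_range_eq_sum_univ (f : ZMod p → ZMod p) :
    ∑ k ∈ Finset.range p, f k = ∑ x : ZMod p, f x := by
  refine Finset.sum_bij' (fun k _ => (k : ZMod p)) (fun x _ => x.val) ?_ ?_ ?_ ?_ ?_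
  · simp
  · intro x _; simpa using ZMod.val_lt x
  · intro k hk; exact ZMod.val_cast_of_lt (Finset.mem_range.mp hk)
  · simp
  · simp

theorem sum_range_pow_eq_zero {i : ℕ} (hi : i < p - 1) :
    ∑ k ∈ Finset.range p, (k : ZMod p) ^ i = 0 := by
  rw [sum_range_eq_sum_univ (fun x => x ^ i)]
  exact FiniteField.sum_pow_lt_card_sub_one (ZMod p) i (by rwa [ZMod.card])

theorem inv_pow_eq_pow {m : ℕ} (hm : 0 < m) (hmp : m < p - 1) (x : ZMod p) :
    x⁻¹ ^ m = x ^ (p - 1 - m) := by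
  rcases eq_or_ne x 0 with rfl | hx
  · rw [inv_zero, zero_pow hm.ne', zero_pow (by omega)]
  · rw [inv_pow]
    refine inv_eq_of_mul_eq_one_right ?_
    rw [← pow_add, Nat.add_sub_cancel' hmp.le, ZMod.pow_card_sub_one_eq_one hx]

theorem sum_range_inv_pow_eq_zero {m : ℕ} (hm : 0 < m) (hmp : m < p - 1) :
    ∑ k ∈ Finset.range p, (k : ZMod p)⁻¹ ^ m = 0 := by
  simp_rw [inv_pow_eq_pow hm hmp]
  exact sum_range_pow_eq_zero (by omega)

theorem sum_range_pred_inv_pow_eq_zero {m : ℕ} (hm : 0 < m) (hmp : m < p - 1) :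
    ∑ k ∈ Finset.range (p - 1), ((k + 1 : ℕ) : ZMod p)⁻¹ ^ m = 0 := by
  obtain ⟨r, hr⟩ : ∃ r, p = r + 1 := ⟨p - 1, by omega⟩
  have h := sum_range_inv_pow_eq_zero hm hmp
  rw [show Finset.range p = Finset.range (r + 1) by rw [← hr], Finset.sum_range_succ',
    Nat.cast_zero, inv_zero, zero_pow hm.ne', add_zero] at h
  rwa [show p - 1 = r by omega]

/-- The residue modulo `p` of the harmonic number of order two. -/
def harmonicSq (p k : ℕ) [Fact p.Prime] : ZMod p :=
  ∑ j ∈ Finset.range k, ((j + 1 : ℕ) : ZMod p)⁻¹ ^ 2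

theorem harmonicSq_succ (k : ℕ) :
    harmonicSq p (k + 1) = harmonicSq p k + ((k + 1 : ℕ) : ZMod p)⁻¹ ^ 2 :=
  Finset.sum_range_succ ..

theorem harmonicSq_zero : harmonicSq p 0 = 0 := Finset.sum_range_zero _

theorem harmonicSq_add_harmonicSq {k : ℕ} (hp : 3 < p) (hk : k + 1 ≤ p) :
    harmonicSq p k + harmonicSq p (p - 1 - k) = 0 := by
  induction k with
  | zero =>
    rw [harmonicSq_zero, zero_add]
    exact sum_range_pred_inv_pow_eq_zero two_pos (by omega)
  | succ k ih =>
    have h := ih (by omega)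
    rw [show p - 1 - k = p - 1 - (k + 1) + 1 by omega, harmonicSq_succ,
      show p - 1 - (k + 1) + 1 = p - (k + 1) by omega, Nat.cast_sub (by omega),
      CharP.cast_eq_zero, zero_sub, inv_neg, neg_sq] at h
    rw [harmonicSq_succ]
    linear_combination h

theorem harmonicSq_half {n : ℕ} (hp : 3 < p) (hn : p = 2 * n + 1) : harmonicSq p n = 0 := by
  have h := harmonicSq_add_harmonicSq (k := n) hp (by omega)
  rw [show p - 1 - n = n by omega, ← two_mul] at h
  exact (mul_eq_zero.mp h).resolve_left
    (by exact_mod_cast natCast_ne_zero_of_pos_of_lt (p := p) two_pos (by omega))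

theorem harmonicSq_half_sub {n m : ℕ} (hp : 3 < p) (hn : p = 2 * n + 1) (hm : m ≤ n) :
    harmonicSq p (n - m) = harmonicSq p m - 4 * harmonicSq p (2 * m) := by
  induction m with
  | zero => simp [harmonicSq_zero, harmonicSq_half hp hn]
  | succ m ih =>
    have h := ih (by omega)
    have h2 : ((2 : ℕ) : ZMod p) ≠ 0 := natCast_ne_zero_of_pos_of_lt two_pos (by omega)
    have hm1 : ((m + 1 : ℕ) : ZMod p) ≠ 0 := natCast_ne_zero_of_pos_of_lt (by omega) (by omega)
    have hm2 : ((2 * m + 1 : ℕ) : ZMod p) ≠ 0 :=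
      natCast_ne_zero_of_pos_of_lt (by omega) (by omega)
    have hnm : ((n - m : ℕ) : ZMod p)⁻¹ = -2 * ((2 * m + 1 : ℕ) : ZMod p)⁻¹ := by
      refine inv_eq_of_mul_eq_one_right ?_
      have : (2 * n + 1 : ZMod p) = 0 := by
        have h := CharP.cast_eq_zero (ZMod p) p
        rw [congrArg (Nat.cast : ℕ → ZMod p) hn] at h
        exact_mod_cast h
      rw [← mul_assoc, Nat.cast_sub (by omega), ← div_eq_mul_inv, div_eq_one_iff_eq hm2]
      push_cast
      linear_combination -this
    rw [show n - m = n - (m + 1) + 1 by omega, harmonicSq_succ,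
      show n - (m + 1) + 1 = n - m by omega, hnm] at h
    rw [show 2 * (m + 1) = 2 * m + 1 + 1 by ring, harmonicSq_succ, harmonicSq_succ, harmonicSq_succ,
      show 2 * m + 1 + 1 = 2 * (m + 1) by ring, Nat.cast_mul 2, mul_inv]
    have h4 : (4 : ZMod p) * (((2 : ℕ) : ZMod p)⁻¹ * ((m + 1 : ℕ) : ZMod p)⁻¹) ^ 2 =
        ((m + 1 : ℕ) : ZMod p)⁻¹ ^ 2 := by
      rw [mul_pow, ← mul_assoc, inv_pow ((2 : ℕ) : ZMod p),
        show (4 : ZMod p) = ((2 : ℕ) : ZMod p) ^ 2 by norm_num,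
        mul_inv_cancel₀ (pow_ne_zero 2 h2), one_mul]
    linear_combination h + h4

/-- The double sum `∑ 1 / (a ^ 2 * b)` over `1 ≤ a ≤ b ≤ p - 1`, modulo `p`. -/
def harmonicTwoOne (p : ℕ) [Fact p.Prime] : ZMod p :=
  ∑ b ∈ Finset.range (p - 1), harmonicSq p (b + 1) * ((b + 1 : ℕ) : ZMod p)⁻¹

theorem harmonicSq_mul_inv_add_reflect {k : ℕ} (hp : 3 < p) (hk : k + 1 < p) :
    harmonicSq p (k + 1) * ((k + 1 : ℕ) : ZMod p)⁻¹ +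
      harmonicSq p (p - (k + 1)) * ((p - (k + 1) : ℕ) : ZMod p)⁻¹ =
    2 * (harmonicSq p (k + 1) * ((k + 1 : ℕ) : ZMod p)⁻¹) - ((k + 1 : ℕ) : ZMod p)⁻¹ ^ 3 := by
  have h := harmonicSq_add_harmonicSq (k := k) hp (by omega)
  rw [show p - 1 - k = p - (k + 1) by omega] at h
  rw [Nat.cast_sub (by omega), CharP.cast_eq_zero (ZMod p) p, zero_sub, inv_neg, harmonicSq_succ]
  linear_combination -((k + 1 : ℕ) : ZMod p)⁻¹ * h

theorem harmonicTwoOne_eq_half {n : ℕ} (hp : 3 < p) (hn : p = 2 * n + 1) :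
    harmonicTwoOne p =
      2 * ∑ i ∈ Finset.range n, harmonicSq p (i + 1) * ((i + 1 : ℕ) : ZMod p)⁻¹ -
        ∑ i ∈ Finset.range n, ((i + 1 : ℕ) : ZMod p)⁻¹ ^ 3 := by
  rw [harmonicTwoOne, show p - 1 = n + n by omega, Finset.sum_range_add,
    ← Finset.sum_range_reflect (fun x => harmonicSq p (n + x + 1) * _), ← Finset.sum_add_distrib,
    Finset.mul_sum, ← Finset.sum_sub_distrib]
  refine Finset.sum_congr rfl fun i hi => ?_
  have hi := Finset.mem_range.mp hi
  rw [← harmonicSq_mul_inv_add_reflect hp (by omega),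
    show n + (n - 1 - i) + 1 = p - (i + 1) by omega]

theorem _root_.Finset.sum_range_two_mul {M : Type*} [AddCommMonoid M] (f : ℕ → M) (n : ℕ) :
    ∑ i ∈ Finset.range (2 * n), f i = ∑ i ∈ Finset.range n, (f (2 * i + 1) + f (2 * i)) := by
  induction n with
  | zero => simp
  | succ n ih =>
    rw [show 2 * (n + 1) = 2 * n + 1 + 1 by ring, Finset.sum_range_succ, Finset.sum_range_succ,
      Finset.sum_range_succ, ih, add_assoc, add_comm (f (2 * n))]

theorem harmonicTwoOne_eq_even {n : ℕ} (hp : 3 < p) (hn : p = 2 * n + 1) :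
    harmonicTwoOne p =
      2 * ∑ i ∈ Finset.range n, harmonicSq p (2 * i + 1 + 1) * ((2 * i + 1 + 1 : ℕ) : ZMod p)⁻¹ -
        ∑ i ∈ Finset.range n, ((2 * i + 1 + 1 : ℕ) : ZMod p)⁻¹ ^ 3 := by
  rw [harmonicTwoOne, show p - 1 = 2 * n by omega, Finset.sum_range_two_mul,
    Finset.sum_add_distrib,
    ← Finset.sum_range_reflect (fun x => harmonicSq p (2 * x + 1) * _), ← Finset.sum_add_distrib,
    Finset.mul_sum, ← Finset.sum_sub_distrib]
  refine Finset.sum_congr rfl fun i hi => ?_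
  have hi := Finset.mem_range.mp hi
  rw [← harmonicSq_mul_inv_add_reflect hp (by omega),
    show 2 * (n - 1 - i) + 1 = p - (2 * i + 1 + 1) by omega]

theorem natCast_choose_pred {k : ℕ} (hk : k < p) : ((p - 1).choose k : ZMod p) = (-1) ^ k := by
  induction k with
  | zero => simp
  | succ k ih =>
    have h : (p.choose (k + 1) : ZMod p) = 0 := by
      rw [ZMod.natCast_eq_zero_iff]
      exact (Fact.out : p.Prime).dvd_choose_self (by omega) hk
    rw [show p.choose (k + 1) = (p - 1 + 1).choose (k + 1) by congr 1; omega,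
      Nat.choose_succ_succ, Nat.cast_add, ih (by omega)] at h
    rw [pow_succ]
    linear_combination h

theorem two_mul_fermatQuotient {Q : ℕ} (hQ : 2 ^ (p - 1) = 1 + p * Q) :
    2 * (Q : ZMod p) = ∑ k ∈ Finset.range (p - 1), (-1) ^ k * ((k + 1 : ℕ) : ZMod p)⁻¹ := by
  have hp := (Fact.out : p.Prime)
  have hp0 := hp.pos
  have hdvd : ∀ k, ∃ c, k < p - 1 → p.choose (k + 1) = p * c := by
    intro k
    by_cases hk : k < p - 1
    · obtain ⟨c, hc⟩ := hp.dvd_choose_self (k := k + 1) (by omega) (by omega)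
      exact ⟨c, fun _ => hc⟩
    · exact ⟨0, fun h => absurd h hk⟩
  choose c hc using hdvd
  have hsum : 2 * Q = ∑ k ∈ Finset.range (p - 1), c k := by
    have h := Nat.sum_range_choose p
    rw [show Finset.range (p + 1) = Finset.range (p - 1 + 1 + 1) by congr 1; omega,
      Finset.sum_range_succ, Finset.sum_range_succ', show p - 1 + 1 = p by omega,
      Nat.choose_self, Nat.choose_zero_right,
      Finset.sum_congr rfl fun k hk => hc k (Finset.mem_range.mp hk), ← Finset.mul_sum,
      show 2 ^ p = 2 ^ (p - 1) * 2 by rw [← pow_succ]; congr 1; omega, hQ] at h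
    exact Nat.eq_of_mul_eq_mul_left hp0 (by linarith)
  rw [← Nat.cast_ofNat (n := 2), ← Nat.cast_mul, hsum, Nat.cast_sum]
  refine Finset.sum_congr rfl fun k hk => ?_
  have hk := Finset.mem_range.mp hk
  have hk0 : ((k + 1 : ℕ) : ZMod p) ≠ 0 := natCast_ne_zero_of_pos_of_lt (by omega) (by omega)
  have h := Nat.add_one_mul_choose_eq (p - 1) k
  rw [show p - 1 + 1 = p by omega, hc k hk, mul_assoc] at h
  rw [← natCast_choose_pred (by omega : k < p), Nat.eq_of_mul_eq_mul_left hp0 h, Nat.cast_mul,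
    mul_inv_cancel_right₀ hk0]

theorem sum_range_odd_inv_sq {n : ℕ} (hp : 3 < p) (hn : p = 2 * n + 1) :
    ∑ i ∈ Finset.range n, ((2 * i + 1 : ℕ) : ZMod p)⁻¹ ^ 2 = 0 := by
  have h := sum_range_pred_inv_pow_eq_zero (p := p) two_pos (by omega)
  have hhalf := harmonicSq_half hp hn
  rw [harmonicSq] at hhalf
  rw [show p - 1 = 2 * n by omega, Finset.sum_range_two_mul, Finset.sum_add_distrib] at h
  simp_rw [show ∀ i, 2 * i + 1 + 1 = 2 * (i + 1) from fun i => by ring, Nat.cast_mul 2, mul_inv,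
    mul_pow] at h
  rwa [← Finset.mul_sum, hhalf, mul_zero, zero_add] at h

theorem sum_harmonicSq_mul_inv_odd {n Q : ℕ} (hp : 3 < p) (hn : p = 2 * n + 1)
    (hQ : 2 ^ (p - 1) = 1 + p * Q) :
    4 * ∑ k ∈ Finset.range n, harmonicSq p (k + 1) * ((2 * k + 1 : ℕ) : ZMod p)⁻¹ =
      7 * harmonicTwoOne p + 32 * Q := by
  have h2 : (2 : ZMod p) ≠ 0 := by
    exact_mod_cast natCast_ne_zero_of_pos_of_lt (p := p) two_pos (by omega)
  have hterm : ∀ m ∈ Finset.range n,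
      harmonicSq p (n - 1 - m + 1) * ((2 * (n - 1 - m) + 1 : ℕ) : ZMod p)⁻¹ =
        4 * (harmonicSq p (2 * m + 1 + 1) * ((2 * m + 1 + 1 : ℕ) : ZMod p)⁻¹) -
        2⁻¹ * (harmonicSq p (m + 1) * ((m + 1 : ℕ) : ZMod p)⁻¹) +
        4 * ((-1) ^ (2 * m + 1) * ((2 * m + 1 + 1 : ℕ) : ZMod p)⁻¹ +
          (-1) ^ (2 * m) * ((2 * m + 1 : ℕ) : ZMod p)⁻¹) -
        4 * ((2 * m + 1 : ℕ) : ZMod p)⁻¹ ^ 2 := by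
    intro m hm
    have hm := Finset.mem_range.mp hm
    have hu : ((m + 1 : ℕ) : ZMod p) ≠ 0 := natCast_ne_zero_of_pos_of_lt (by omega) (by omega)
    have hv : ((2 * m + 1 : ℕ) : ZMod p) ≠ 0 := natCast_ne_zero_of_pos_of_lt (by omega) (by omega)
    rw [show n - 1 - m + 1 = n - m by omega, harmonicSq_half_sub hp hn hm.le,
      show 2 * (n - 1 - m) + 1 = p - 2 * (m + 1) by omega, Nat.cast_sub (by omega),
      CharP.cast_eq_zero (ZMod p) p, zero_sub, harmonicSq_succ, harmonicSq_succ, harmonicSq_succ,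
      show 2 * m + 1 + 1 = 2 * (m + 1) by ring, Nat.cast_mul 2, pow_succ (-1 : ZMod p),
      (even_two_mul m).neg_one_pow]
    push_cast at hu hv ⊢
    field_simp
    ring
  have hsum := Finset.sum_congr rfl hterm
  rw [Finset.sum_range_reflect (fun k => harmonicSq p (k + 1) * ((2 * k + 1 : ℕ) : ZMod p)⁻¹),
    Finset.sum_sub_distrib, Finset.sum_add_distrib, Finset.sum_sub_distrib, ← Finset.mul_sum,
    ← Finset.mul_sum, ← Finset.mul_sum, ← Finset.mul_sum, sum_range_odd_inv_sq hp hn,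
    ← Finset.sum_range_two_mul (fun k => (-1) ^ k * ((k + 1 : ℕ) : ZMod p)⁻¹),
    show 2 * n = p - 1 by omega, ← two_mul_fermatQuotient hQ] at hsum
  have hhalf := harmonicTwoOne_eq_half hp hn
  have heven := harmonicTwoOne_eq_even hp hn
  have hcube : 8 * ∑ i ∈ Finset.range n, ((2 * i + 1 + 1 : ℕ) : ZMod p)⁻¹ ^ 3 =
      ∑ i ∈ Finset.range n, ((i + 1 : ℕ) : ZMod p)⁻¹ ^ 3 := by
    rw [Finset.mul_sum]
    refine Finset.sum_congr rfl fun i _ => ?_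
    rw [show 2 * i + 1 + 1 = 2 * (i + 1) by ring, Nat.cast_mul 2, mul_inv, mul_pow, ← mul_assoc]
    rw [show (8 : ZMod p) * ((2 : ℕ) : ZMod p)⁻¹ ^ 3 = 1 by push_cast; field_simp; norm_num,
      one_mul]
  rw [hsum]
  have h22 : (2 : ZMod p) * 2⁻¹ = 1 := mul_inv_cancel₀ h2
  linear_combination (-8) * heven + hhalf + hcube -
    2 * (∑ i ∈ Finset.range n, harmonicSq p (i + 1) * ((i + 1 : ℕ) : ZMod p)⁻¹) * h22

theorem sum_range_pow_of_reducesTo {β : ℕ → ZMod p} {m : ℕ} (hm : m + 1 < p)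
    (hβ : ∀ i ≤ m, ReducesTo p (bernoulli i) (β i)) (b : ℕ) :
    ∑ a ∈ Finset.range b, (a : ZMod p) ^ m =
      ∑ i ∈ Finset.range (m + 1),
        β i * (m + 1).choose i * (b : ZMod p) ^ (m + 1 - i) / ((m + 1 : ℕ) : ZMod p) := by
  refine ReducesTo.unique (q := ∑ a ∈ Finset.range b, (a : ℚ) ^ m)
    (.sum fun a _ => (ReducesTo.natCast a).pow m) ?_
  rw [sum_range_pow]
  refine .sum fun i hi => ?_
  rw [← Nat.cast_add_one m]
  exact (((hβ i (Nat.lt_succ_iff.mp (Finset.mem_range.mp hi))).mul (.natCast _)).mul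
    ((ReducesTo.natCast b).pow _)).div (.natCast _)
    (natCast_ne_zero_of_pos_of_lt (by omega) (by omega))

theorem harmonicSq_eq_sum_pow (hp : 3 < p) (b : ℕ) :
    harmonicSq p b = ∑ a ∈ Finset.range (b + 1), (a : ZMod p) ^ (p - 3) := by
  rw [Finset.sum_range_succ', Nat.cast_zero, zero_pow (by omega), add_zero, harmonicSq]
  refine Finset.sum_congr rfl fun a _ => ?_
  rw [inv_pow_eq_pow two_pos (by omega), show p - 1 - 2 = p - 3 by omega]

theorem sum_range_pred_pow {m : ℕ} (hm : m < p - 1) :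
    ∑ b ∈ Finset.range (p - 1), ((b + 1 : ℕ) : ZMod p) ^ m = if m = 0 then -1 else 0 := by
  split_ifs with h
  · simp [h, Nat.cast_sub (show 1 ≤ p by omega)]
  · obtain ⟨r, hr⟩ : ∃ r, p = r + 1 := ⟨p - 1, by omega⟩
    have hsum := sum_range_pow_eq_zero hm
    rw [show Finset.range p = Finset.range (r + 1) by rw [← hr], Finset.sum_range_succ',
      Nat.cast_zero, zero_pow h, add_zero] at hsum
    rwa [show p - 1 = r by omega]

theorem reducesTo_bernoulli_sub_three (hp : 3 < p) :
    ReducesTo p (bernoulli (p - 3)) (-harmonicTwoOne p) := by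
  have hint : ∀ i, ∃ z, i ≤ p - 3 → ReducesTo p (bernoulli i) z := fun i => by
    by_cases hi : i ≤ p - 3
    · obtain ⟨z, hz⟩ := exists_reducesTo_bernoulli (p := p) i (by omega)
      exact ⟨z, fun _ => hz⟩
    · exact ⟨0, fun h => absurd h hi⟩
  choose β hβ using hint
  suffices h : harmonicTwoOne p = -β (p - 3) by
    rw [h, neg_neg]
    exact hβ _ le_rfl
  obtain ⟨m, hm⟩ : ∃ m, p = m + 3 := ⟨p - 3, by omega⟩
  have hm' : p - 3 = m := by omega
  have hp4 : 3 < p - 1 := by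
    have : p ≠ 4 := by
      rintro rfl
      exact absurd (Fact.out : Nat.Prime 4) (by norm_num)
    omega
  have hm1 : ((m + 1 : ℕ) : ZMod p) ≠ 0 := natCast_ne_zero_of_pos_of_lt (by omega) (by omega)
  have hterm : ∀ b ∈ Finset.range (p - 1),
      harmonicSq p (b + 1) * ((b + 1 : ℕ) : ZMod p)⁻¹ =
        ∑ i ∈ Finset.range (m + 1), β i * (m + 1).choose i / ((m + 1 : ℕ) : ZMod p) *
          ((b + 1 : ℕ) : ZMod p) ^ (m - i) + ((b + 1 : ℕ) : ZMod p)⁻¹ ^ 3 := by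
    intro b hb
    have hb0 : ((b + 1 : ℕ) : ZMod p) ≠ 0 :=
      natCast_ne_zero_of_pos_of_lt (by omega) (by have := Finset.mem_range.mp hb; omega)
    rw [harmonicSq_succ, harmonicSq_eq_sum_pow hp, hm',
      sum_range_pow_of_reducesTo (β := β) (by omega) (fun i hi => hβ i (by omega)), add_mul,
      Finset.sum_mul, ← pow_succ]
    congr 1
    refine Finset.sum_congr rfl fun i hi => ?_
    rw [show m + 1 - i = m - i + 1 by have := Finset.mem_range.mp hi; omega, pow_succ]
    field_simp
  rw [harmonicTwoOne, Finset.sum_congr rfl hterm, Finset.sum_add_distrib, Finset.sum_comm,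
    sum_range_pred_inv_pow_eq_zero three_pos hp4, add_zero]
  simp_rw [← Finset.mul_sum]
  rw [Finset.sum_range_succ, Finset.sum_eq_zero, sum_range_pred_pow (by omega), hm']
  · simp only [Nat.choose_succ_self_right, Nat.sub_self, if_true, zero_add]
    field_simp
  · intro i hi
    have := Finset.mem_range.mp hi
    rw [sum_range_pred_pow (by omega), if_neg (by omega), mul_zero]

theorem _root_.Finset.sum_Icc_one_eq_sum_range {M : Type*} [AddCommMonoid M] (f : ℕ → M) (n : ℕ) :
    ∑ k ∈ Finset.Icc 1 n, f k = ∑ k ∈ Finset.range n, f (k + 1) := by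
  induction n with
  | zero => simp
  | succ n ih => rw [Finset.sum_Icc_succ_top (by omega), ih, Finset.sum_range_succ]

theorem reducesTo_harmonic2 {k : ℕ} (hk : k < p) :
    ReducesTo p (harmonic2 k) (harmonicSq p k) := by
  rw [harmonic2, Finset.sum_Icc_one_eq_sum_range]
  refine .sum fun j hj => ?_
  have hj := Finset.mem_range.mp hj
  simpa using ((ReducesTo.natCast (p := p) (j + 1)).inv
    (natCast_ne_zero_of_pos_of_lt (by omega) (by omega))).pow 2

theorem exists_fermatQ_eq_natCast (hp : 2 < p) :
    ∃ Q : ℕ, 2 ^ (p - 1) = 1 + p * Q ∧ fermatQ p = Q := by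
  have hpp := (Fact.out : p.Prime)
  have hdvd : p ∣ 2 ^ (p - 1) - 1 := by
    rw [← ZMod.natCast_eq_zero_iff, Nat.cast_sub Nat.one_le_two_pow, sub_eq_zero]
    push_cast
    exact ZMod.pow_card_sub_one_eq_one
      (by exact_mod_cast natCast_ne_zero_of_pos_of_lt (p := p) two_pos hp)
  obtain ⟨Q, hQ⟩ := hdvd
  have hpow : 2 ^ (p - 1) = 1 + p * Q := by
    have := Nat.one_le_two_pow (n := p - 1)
    omega
  refine ⟨Q, hpow, ?_⟩
  have hcast : (2 : ℚ) ^ (p - 1) = 1 + p * Q := by exact_mod_cast hpow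
  rw [fermatQ, hcast, add_sub_cancel_left, mul_div_cancel_left₀ _ (by exact_mod_cast hpp.ne_zero)]

theorem reducesTo_summand {n k : ℕ} (hn : p = 2 * n + 1) (hk : k < n) :
    ReducesTo p (((p : ℚ) / 2 - (k + 1 : ℕ)) * harmonic2 (k + 1) /
        (((p : ℚ) + 1 - 2 * (k + 1 : ℕ)) * ((p : ℚ) + 2 * (k + 1 : ℕ))))
      (2⁻¹ * (harmonicSq p (k + 1) * ((2 * k + 1 : ℕ) : ZMod p)⁻¹)) := by
  have h2 : ((2 : ℕ) : ZMod p) ≠ 0 := natCast_ne_zero_of_pos_of_lt two_pos (by omega)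
  have hu : ((k + 1 : ℕ) : ZMod p) ≠ 0 := natCast_ne_zero_of_pos_of_lt (by omega) (by omega)
  have hv : ((2 * k + 1 : ℕ) : ZMod p) ≠ 0 := natCast_ne_zero_of_pos_of_lt (by omega) (by omega)
  have hp0 : ReducesTo p (p : ℚ) 0 := by simpa using ReducesTo.natCast (p := p) p
  have h2k := (ReducesTo.natCast (p := p) 2).mul (.natCast (k + 1))
  have hden := ((hp0.add (.natCast 1)).sub h2k).mul (hp0.add h2k)
  have hne : (0 + ((1 : ℕ) : ZMod p) - (2 : ℕ) * (k + 1 : ℕ)) * (0 + (2 : ℕ) * (k + 1 : ℕ)) ≠ 0 := by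
    rw [zero_add, zero_add]
    refine mul_ne_zero ?_ (mul_ne_zero h2 hu)
    convert neg_ne_zero.mpr hv using 1
    push_cast
    ring
  have h := (((hp0.div (.natCast 2) h2).sub (.natCast (k + 1))).mul
    (reducesTo_harmonic2 (p := p) (k := k + 1) (by omega))).div hden hne
  convert h using 1
  · push_cast
    ring
  · rw [show (0 + ((1 : ℕ) : ZMod p) - (2 : ℕ) * (k + 1 : ℕ)) = -((2 * k + 1 : ℕ) : ZMod p) by
      push_cast; ring, zero_add, zero_div, zero_sub]
    push_cast at h2 hu hv ⊢
    field_simp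

end ZMod

theorem sum_H2_k_congr (p : ℕ) (hp : p.Prime) (hp3 : 3 < p) :
    ratCongr p 1
      (∑ k ∈ Finset.Icc 1 ((p - 1) / 2),
        ((p : ℚ) / 2 - k) * harmonic2 k / (((p : ℚ) + 1 - 2 * k) * ((p : ℚ) + 2 * k)))
      (4 * fermatQ p - (7 / 8) * bernoulli (p - 3)) := by
  have : Fact p.Prime := ⟨hp⟩
  obtain ⟨n, hn⟩ : ∃ n, p = 2 * n + 1 := hp.odd_of_ne_two (by omega)
  obtain ⟨Q, hQ, hfermat⟩ := ZMod.exists_fermatQ_eq_natCast (p := p) (by omega)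
  have h2 : ((2 : ℕ) : ZMod p) ≠ 0 := ZMod.natCast_ne_zero_of_pos_of_lt two_pos (by omega)
  have h8 : ((8 : ℕ) : ZMod p) ≠ 0 := by
    rw [show 8 = 2 ^ 3 by norm_num, Nat.cast_pow]
    exact pow_ne_zero 3 h2
  rw [hfermat, show (p - 1) / 2 = n by omega, Finset.sum_Icc_one_eq_sum_range]
  refine ReducesTo.ratCongr_one
    (.sum fun k hk => ZMod.reducesTo_summand hn (Finset.mem_range.mp hk)) ?_
  rw [← Finset.mul_sum]
  convert ((ReducesTo.natCast (p := p) 4).mul (.natCast Q)).sub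
    (((ReducesTo.natCast 7).div (.natCast 8) h8).mul (ZMod.reducesTo_bernoulli_sub_three hp3))
    using 1
  · norm_num
  · have h := ZMod.sum_harmonicSq_mul_inv_odd hp3 hn hQ
    generalize ∑ k ∈ Finset.range n,
      ZMod.harmonicSq p (k + 1) * ((2 * k + 1 : ℕ) : ZMod p)⁻¹ = X at h ⊢
    push_cast at h2 h8 ⊢
    field_simp
    linear_combination 2 * h
end

section
/- Let p > 3 be a prime. Define F(n,k) and G(n,k) as follows: F(n,k) = (6n-2k+1)/2^{8n-2k} · C(2n,n)·C(2n+2k,n+k)·C(2n-2k,n-k)·C(n+k,n) / C(2k,k) for n ≥ k and F(n,k) = 0 for n < k; G(n,k) = n^2·C(2n,n)·C(2n+2k,n+k)·C(2n-2k,n-k)·C(n+k,n) / (2^{8n-2k-4}·(2n+2k-1)·C(2k,k)) for n ≥ k with (n,k) ≠ (0,0), and G(n,k) = 0 for n < k. Then ∑_{n=0}^{(p-1)/2} F(n,0) = F((p-1)/2, (p-1)/2) + ∑_{k=1}^{(p-1)/2} G((p+1)/2, k). -/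
/-- The WZ-pair function `F(n,k)`; it vanishes for `n < k`. -/
def F (n k : ℕ) : ℚ :=
  if k ≤ n then
    (6 * (n : ℚ) - 2 * k + 1) / 2 ^ (8 * n - 2 * k) *
      (((2 * n).choose n : ℚ) * ((2 * n + 2 * k).choose (n + k)) *
        ((2 * n - 2 * k).choose (n - k)) * ((n + k).choose n)) /
      ((2 * k).choose k)
  else 0

/-- The WZ-pair function `G(n,k)`; it vanishes for `n < k` (and we also set
`G(0,0) = 0`, a value never used). -/
def G (n k : ℕ) : ℚ :=
  if k ≤ n ∧ (n, k) ≠ (0, 0) then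
    (n : ℚ) ^ 2 *
      (((2 * n).choose n : ℚ) * ((2 * n + 2 * k).choose (n + k)) *
        ((2 * n - 2 * k).choose (n - k)) * ((n + k).choose n)) /
      (2 ^ (8 * n - 2 * k - 4) * (2 * (n : ℚ) + 2 * k - 1) * ((2 * k).choose k))
  else 0

/-- `F` in terms of central binomial coefficients, without truncated subtraction. -/
theorem F_add_left (k d : ℕ) :
    F (k + d) k = (6 * (d : ℚ) + 4 * k + 1) / 2 ^ (6 * k + 8 * d) *
      ((k + d).centralBinom * (2 * k + d).centralBinom * d.centralBinom *
        (2 * k + d).choose (k + d)) / k.centralBinom := by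
  have h₁ : 8 * (k + d) - 2 * k = 6 * k + 8 * d := by lia
  have h₂ : 2 * (k + d) + 2 * k = 2 * (2 * k + d) := by ring
  have h₃ : 2 * (k + d) - 2 * k = 2 * d := by lia
  have h₄ : k + d + k = 2 * k + d := by ring
  rw [F, if_pos (Nat.le_add_right k d), h₁, h₂, h₃, h₄, Nat.add_sub_cancel_left]
  simp only [Nat.centralBinom_eq_two_mul_choose]
  push_cast
  ring

/-- `G` in terms of central binomial coefficients, without truncated subtraction. -/
theorem G_add_left (k d : ℕ) :
    G (k + 1 + d) (k + 1) = ((k : ℚ) + 1 + d) ^ 2 *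
      ((k + 1 + d).centralBinom * (2 * k + d + 2).centralBinom * d.centralBinom *
        (2 * k + d + 2).choose (k + 1 + d)) /
      (2 ^ (6 * k + 2 + 8 * d) * (4 * (k : ℚ) + 2 * d + 3) * (k + 1).centralBinom) := by
  have h₁ : 8 * (k + 1 + d) - 2 * (k + 1) - 4 = 6 * k + 2 + 8 * d := by lia
  have h₂ : 2 * (k + 1 + d) + 2 * (k + 1) = 2 * (2 * k + d + 2) := by ring
  have h₃ : 2 * (k + 1 + d) - 2 * (k + 1) = 2 * d := by lia
  have h₄ : k + 1 + d + (k + 1) = 2 * k + d + 2 := by ring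
  have h₅ : (2 * ((k : ℚ) + 1 + d) + 2 * (k + 1) - 1) = 4 * k + 2 * d + 3 := by ring
  rw [G, if_pos ⟨Nat.le_add_right (k + 1) d, by simp⟩, h₁, h₂, h₃, h₄,
    Nat.add_sub_cancel_left]
  simp only [Nat.centralBinom_eq_two_mul_choose]
  push_cast
  rw [h₅]

theorem F_of_lt {n k : ℕ} (h : n < k) : F n k = 0 := if_neg (by lia)

theorem G_of_lt {n k : ℕ} (h : n < k) : G n k = 0 := if_neg (by lia)

theorem cast_centralBinom_succ (n : ℕ) :
    ((n + 1).centralBinom : ℚ) = 2 * (2 * n + 1) * n.centralBinom / (n + 1) := by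
  rw [eq_div_iff (by positivity), mul_comm]
  exact_mod_cast Nat.succ_mul_centralBinom_succ n

theorem cast_choose_succ_succ (n k : ℕ) :
    ((n + 1).choose (k + 1) : ℚ) = (n + 1) * n.choose k / (k + 1) := by
  rw [eq_div_iff (by positivity)]
  exact_mod_cast (Nat.add_one_mul_choose_eq n k).symm

theorem cast_choose_add_succ (a b : ℕ) :
    ((a + b + 1).choose a : ℚ) = (a + b + 1) * (a + b).choose a / (b + 1) := by
  rw [add_assoc, Nat.choose_symm_add, ← add_assoc, cast_choose_succ_succ, Nat.choose_symm_add]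
  push_cast
  rfl

/-- The WZ relation on the diagonal, where `F n (n + 1)` and `G n (n + 1)` vanish. -/
theorem F_self_eq_G_succ_self (k : ℕ) : F k k = G (k + 1) (k + 1) := by
  have hF := F_add_left k 0
  have hG := G_add_left k 0
  have hb : (k.centralBinom : ℚ) ≠ 0 := by exact_mod_cast k.centralBinom_ne_zero
  have hc : ((2 * k + 2).choose (k + 1) : ℚ) = 2 * (2 * k + 1) * k.centralBinom / (k + 1) := by
    rw [← cast_centralBinom_succ, Nat.centralBinom_eq_two_mul_choose, Nat.mul_add_one]
  simp only [add_zero, mul_zero, Nat.cast_zero, zero_add] at hF hG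
  rw [hF, hG, hc, cast_centralBinom_succ (2 * k + 1), cast_centralBinom_succ (2 * k),
    cast_centralBinom_succ k, ← Nat.centralBinom_eq_two_mul_choose]
  push_cast
  field_simp
  ring

/-- The WZ relation away from the diagonal. -/
theorem F_sub_F_succ_of_lt (k d : ℕ) :
    F (k + 1 + d) k - F (k + 1 + d) (k + 1) =
      G (k + 1 + d + 1) (k + 1) - G (k + 1 + d) (k + 1) := by
  have hF := F_add_left k (d + 1)
  have hF' := F_add_left (k + 1) d
  have hG := G_add_left k (d + 1)
  have hb : (k.centralBinom : ℚ) ≠ 0 := by exact_mod_cast k.centralBinom_ne_zero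
  have hc : ((2 * k + d + 2).choose (k + 1 + d) : ℚ) =
      (2 * k + d + 2) * (2 * k + d + 1).choose (k + 1 + d) / (k + 1) := by
    have h := cast_choose_add_succ (k + 1 + d) k
    rw [show k + 1 + d + k = 2 * k + d + 1 by ring] at h
    rw [h]
    push_cast
    ring
  have hc' : ((2 * k + d + 3).choose (k + 1 + d + 1) : ℚ) =
      (2 * k + d + 3) * (2 * k + d + 2).choose (k + 1 + d) / (k + 1 + d + 1) := by
    rw [cast_choose_succ_succ]
    push_cast
    ring
  rw [show k + (d + 1) = k + 1 + d by ring, show 2 * k + (d + 1) = 2 * k + d + 1 by ring] at hF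
  rw [show 2 * (k + 1) + d = 2 * k + d + 2 by ring] at hF'
  rw [show k + 1 + (d + 1) = k + 1 + d + 1 by ring,
    show 2 * k + (d + 1) + 2 = 2 * k + d + 3 by ring] at hG
  rw [hF, hF', hG, G_add_left, hc', hc, cast_centralBinom_succ (k + 1 + d),
    cast_centralBinom_succ (2 * k + d + 2), cast_centralBinom_succ (2 * k + d + 1),
    cast_centralBinom_succ d, cast_centralBinom_succ k]
  push_cast
  field_simp
  ring

theorem F_sub_F_succ (n k : ℕ) :
    F n k - F n (k + 1) = G (n + 1) (k + 1) - G n (k + 1) := by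
  rcases lt_trichotomy n k with h | rfl | h
  · simp [F_of_lt h, F_of_lt (h.trans k.lt_succ_self), G_of_lt (Nat.succ_lt_succ h),
      G_of_lt (h.trans k.lt_succ_self)]
  · rw [F_of_lt n.lt_succ_self, G_of_lt n.lt_succ_self, F_self_eq_G_succ_self]
  · obtain ⟨d, rfl⟩ := Nat.exists_eq_add_of_le (Nat.succ_le_of_lt h)
    exact F_sub_F_succ_of_lt k d

theorem sum_F_sub_sum_F_succ (N k : ℕ) :
    ∑ n ∈ Finset.range N, F n k - ∑ n ∈ Finset.range N, F n (k + 1) = G N (k + 1) := by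
  rw [← Finset.sum_sub_distrib, Finset.sum_congr rfl fun n _ => F_sub_F_succ n k,
    Finset.sum_range_sub (fun n => G n (k + 1)), G_of_lt k.succ_pos, sub_zero]

theorem sum_F_zero (N : ℕ) :
    ∑ n ∈ Finset.range (N + 1), F n 0 = F N N + ∑ k ∈ Finset.Icc 1 N, G (N + 1) k := by
  have hG : ∑ k ∈ Finset.Icc 1 N, G (N + 1) k = ∑ k ∈ Finset.range N, G (N + 1) (k + 1) := by
    rw [Finset.range_eq_Ico, Finset.sum_Ico_add' (G (N + 1)) 0 N 1]
    rfl
  have hF : ∑ n ∈ Finset.range (N + 1), F n N = F N N := by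
    rw [Finset.sum_range_succ,
      Finset.sum_eq_zero fun n hn => F_of_lt (Finset.mem_range.mp hn), zero_add]
  rw [hG, Finset.sum_congr rfl fun k _ => (sum_F_sub_sum_F_succ (N + 1) k).symm,
    Finset.sum_range_sub' (fun k => ∑ n ∈ Finset.range (N + 1), F n k), hF]
  ring

theorem wz_summation_identity (p : ℕ) (hp : p.Prime) (hp3 : 3 < p) :
    ∑ n ∈ Finset.range ((p - 1) / 2 + 1), F n 0 =
      F ((p - 1) / 2) ((p - 1) / 2) + ∑ k ∈ Finset.Icc 1 ((p - 1) / 2), G ((p + 1) / 2) k := by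
  have h : (p + 1) / 2 = (p - 1) / 2 + 1 := by lia
  rw [h]
  exact sum_F_zero _
end
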